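/- There exists an optimal ordering d (an ordering maximizing val) such that every connected component of the subgraph (V, O), where O is the set of edges realized by d, occupies a set of consecutive positions under d; i.e., for every such component C, the image d(C) is an interval of consecutive integers. -/

import Mathlib

open Classical in
/-- The Ext-TSP value of an ordering `d` of the vertices of `G`. -/
noncomputable def extVal {V : Type} [Fintype V] (G : SimpleGraph V)
    (w : V → V → ℝ) (f : ℕ → ℝ) (d : V ≃ Fin (Fintype.card V)) : ℝ :=
  (1 / 2) * ∑ u : V, ∑ v : V,
    if G.Adj u v then f (Nat.dist (d u) (d v)) * w u v else 0

/-!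
Take an optimal ordering whose set of realized edges is maximal under inclusion, and rearrange it
so that the components of its realized graph become consecutive blocks, keeping the order inside
each block. Two vertices of the same component are then separated only by vertices that already
separated them, so no realized edge gets longer: the new ordering is still optimal and realizes all
the old edges. By maximality it realizes no others, so its realized components are the blocks.
-/

section Grouping

variable {V α : Type*} [LinearOrder α] {n : ℕ}

theorem tuple_sort_symm_lt_iff (f : Fin n → α) (i j : Fin n) :
    (Tuple.sort f).symm i < (Tuple.sort f).symm j ↔ f i < f j ∨ f i = f j ∧ i < j := by
  change (Tuple.graphEquiv₂ f).symm (Tuple.graphEquiv₁ f i) <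
    (Tuple.graphEquiv₂ f).symm (Tuple.graphEquiv₁ f j) ↔ _
  rw [OrderIso.lt_iff_lt]
  exact Prod.Lex.toLex_lt_toLex

/-- The ordering obtained from `d` by sorting the vertices stably by their labels `c`: each label
class becomes a block, inside which the order of `d` is kept. -/
def groupBy (c : V → α) (d : V ≃ Fin n) : V ≃ Fin n :=
  d.trans (Tuple.sort (c ∘ d.symm)).symm

theorem groupBy_lt_groupBy_iff (c : V → α) (d : V ≃ Fin n) (u v : V) :
    groupBy c d u < groupBy c d v ↔ c u < c v ∨ c u = c v ∧ d u < d v := by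
  simp only [groupBy, Equiv.trans_apply, tuple_sort_symm_lt_iff, Function.comp_apply,
    Equiv.symm_apply_apply]

theorem groupBy_le_groupBy_iff (c : V → α) (d : V ≃ Fin n) (u v : V) :
    groupBy c d u ≤ groupBy c d v ↔ c u < c v ∨ c u = c v ∧ d u ≤ d v := by
  rw [← not_lt, groupBy_lt_groupBy_iff]
  grind

theorem label_eq_of_groupBy_between (c : V → α) (d : V ≃ Fin n) {u v x : V}
    (huv : c u = c v) (hux : groupBy c d u ≤ groupBy c d x)
    (hxv : groupBy c d x ≤ groupBy c d v) : c u = c x := by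
  rw [groupBy_le_groupBy_iff] at hux hxv
  grind

theorem val_sub_val_le_of_between {m : ℕ} {d : V → Fin m} (hd : Function.Injective d)
    (e : V ≃ Fin n) {u v : V} (h : ∀ x, e u < e x → e x ≤ e v → d u < d x ∧ d x ≤ d v) :
    (e v : ℕ) - e u ≤ (d v : ℕ) - d u := by
  rw [← Fin.card_Ioc, ← Fin.card_Ioc]
  refine Finset.card_le_card_of_injOn (d ∘ e.symm) (fun i hi => ?_)
    (hd.comp e.symm.injective).injOn
  obtain ⟨hui, hiv⟩ := Finset.mem_Ioc.1 hi
  exact Finset.mem_Ioc.2 (h (e.symm i) (by simpa using hui) (by simpa using hiv))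

theorem dist_groupBy_le (c : V → α) (d : V ≃ Fin n) {u v : V}
    (huv : c u = c v) :
    Nat.dist (groupBy c d u) (groupBy c d v) ≤ Nat.dist (d u) (d v) := by
  have gap_le : ∀ {a b : V}, c a = c b →
      (groupBy c d b : ℕ) - groupBy c d a ≤ (d b : ℕ) - d a := by
    intro a b hab
    refine val_sub_val_le_of_between d.injective _ fun x hax hxb => ?_
    have hcx : c a = c x := label_eq_of_groupBy_between c d hab hax.le hxb
    rw [groupBy_lt_groupBy_iff] at hax
    rw [groupBy_le_groupBy_iff] at hxb
    grind
  -- `Nat.dist` is by definition the sum of the two truncated differences.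
  exact Nat.add_le_add (gap_le huv.symm) (gap_le huv)

/-- Every connected component of `H` occupies consecutive positions under `d`. -/
def HasContiguousComponents (H : SimpleGraph V) (d : V → Fin n) : Prop :=
  ∀ u v x, H.Reachable u v → d u ≤ d x → d x ≤ d v → H.Reachable u x

theorem exists_hasContiguousComponents_dist_le (H : SimpleGraph V) (d : V ≃ Fin n) :
    ∃ e : V ≃ Fin n, HasContiguousComponents H e ∧
      ∀ u v, H.Reachable u v → Nat.dist (e u) (e v) ≤ Nat.dist (d u) (d v) := by
  -- The order in which the components are laid out is irrelevant, so any linear order will do.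
  obtain ⟨_, -⟩ := exists_wellFoundedLT H.ConnectedComponent
  simp only [HasContiguousComponents, ← SimpleGraph.ConnectedComponent.eq]
  exact ⟨groupBy H.connectedComponentMk d,
    fun _ _ _ => label_eq_of_groupBy_between _ d, fun _ _ => dist_groupBy_le _ d⟩

end Grouping

section Realized

variable {V : Type*} {m n : ℕ}

/-- The graph `(V, O)` whose edges are the edges of `G` realized by `d`. -/
def realizedGraph (G : SimpleGraph V) (k : ℕ) (d : V → Fin n) : SimpleGraph V :=
  SimpleGraph.fromRel fun a b => G.Adj a b ∧ Nat.dist (d a) (d b) ≤ k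

theorem realizedGraph_adj {G : SimpleGraph V} {k : ℕ} {d : V → Fin n} {u v : V} :
    (realizedGraph G k d).Adj u v ↔ G.Adj u v ∧ Nat.dist (d u) (d v) ≤ k := by
  rw [realizedGraph, SimpleGraph.fromRel_adj, G.adj_comm v u, Nat.dist_comm (d v), or_self]
  exact and_iff_right_of_imp fun h => h.1.ne

theorem realizedGraph_le_realizedGraph {G : SimpleGraph V} {k : ℕ} {d : V → Fin m}
    {e : V → Fin n} (h : ∀ u v, (realizedGraph G k d).Adj u v →
      Nat.dist (e u) (e v) ≤ Nat.dist (d u) (d v)) :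
    realizedGraph G k d ≤ realizedGraph G k e := by
  intro u v huv
  obtain ⟨hG, hk⟩ := realizedGraph_adj.1 huv
  exact realizedGraph_adj.2 ⟨hG, (h u v huv).trans hk⟩

theorem extTSP_exists_optimal_with_contiguous_components_general {α : Type*} [Fintype V]
    [LinearOrder α] (G : SimpleGraph V) (k : ℕ) (val : (V ≃ Fin (Fintype.card V)) → α)
    (hval : ∀ d e : V ≃ Fin (Fintype.card V),
      (∀ u v, (realizedGraph G k d).Adj u v → Nat.dist (e u) (e v) ≤ Nat.dist (d u) (d v)) →
      val d ≤ val e) :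
    ∃ d : V ≃ Fin (Fintype.card V),
      (∀ d', val d' ≤ val d) ∧ HasContiguousComponents (realizedGraph G k d) d := by
  have : Nonempty (V ≃ Fin (Fintype.card V)) := ⟨Fintype.equivFin V⟩
  let optimal : Set (V ≃ Fin (Fintype.card V)) := {d | ∀ d', val d' ≤ val d}
  have optimal_nonempty : optimal.Nonempty := Finite.exists_max val
  obtain ⟨d, hd, hmax⟩ := optimal.toFinite.exists_maximalFor
    (fun d : V ≃ Fin (Fintype.card V) => realizedGraph G k d) _ optimal_nonempty
  obtain ⟨e, hcontig, hdist⟩ := exists_hasContiguousComponents_dist_le (realizedGraph G k d) d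
  have hshort : ∀ u v, (realizedGraph G k d).Adj u v →
      Nat.dist (e u) (e v) ≤ Nat.dist (d u) (d v) := fun u v huv => hdist u v huv.reachable
  have he : e ∈ optimal := fun d' => (hd d').trans (hval d e hshort)
  have hle : realizedGraph G k d ≤ realizedGraph G k e := realizedGraph_le_realizedGraph hshort
  have heq : realizedGraph G k e = realizedGraph G k d := (hmax he hle).antisymm hle
  exact ⟨e, he, heq ▸ hcontig⟩

end Realized

theorem apply_le_apply_of_antitone_of_const {α : Type*} [Preorder α] {f : ℕ → α}
    (hf : Antitone f) {k : ℕ} {c : α} (hc : ∀ i, k < i → f i = c) {i j : ℕ}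
    (h : i ≤ k → j ≤ i) : f i ≤ f j := by
  rcases le_or_gt i k with hik | hki
  · exact hf (h hik)
  · calc f i = f (max i j) := by rw [hc i hki, hc _ (lt_max_of_lt_left hki)]
      _ ≤ f j := hf (le_max_right i j)

theorem extVal_le_extVal {V : Type} [Fintype V] {G : SimpleGraph V} {w : V → V → ℝ}
    (hw : ∀ u v, G.Adj u v → 0 ≤ w u v) {k : ℕ} {f : ℕ → ℝ} (hf : Antitone f)
    (hf_zero : ∀ i, k < i → f i = 0) {d e : V ≃ Fin (Fintype.card V)}
    (h : ∀ u v, (realizedGraph G k d).Adj u v →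
      Nat.dist (e u) (e v) ≤ Nat.dist (d u) (d v)) :
    extVal G w f d ≤ extVal G w f e := by
  refine mul_le_mul_of_nonneg_left ?_ one_half_pos.le
  refine Finset.sum_le_sum fun u _ => Finset.sum_le_sum fun v _ => ?_
  split_ifs with huv
  · have hfdist : f (Nat.dist (d u) (d v)) ≤ f (Nat.dist (e u) (e v)) :=
      apply_le_apply_of_antitone_of_const hf hf_zero fun hk =>
        h u v (realizedGraph_adj.2 ⟨huv, hk⟩)
    exact mul_le_mul_of_nonneg_right hfdist (hw u v huv)
  · exact le_rfl

/-- There is an optimal ordering `d` such that every connected component of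
the subgraph of edges realized by `d` (edges whose endpoints are at distance at most `k`)
occupies a set of consecutive positions: if `u` and `v` lie in a common component, then so
does every vertex `x` whose position lies between those of `u` and `v`. -/
theorem extTSP_exists_optimal_with_contiguous_components {V : Type} [Fintype V] [DecidableEq V]
    (G : SimpleGraph V) [DecidableRel G.Adj]
    (w : V → V → ℝ) (hw_symm : ∀ u v, w u v = w v u)
    (hw_pos : ∀ u v, G.Adj u v → 0 < w u v)
    (k : ℕ) (hk : 1 ≤ k)
    (f : ℕ → ℝ) (hf_nonneg : ∀ i, 0 ≤ f i) (hf_mono : Antitone f)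
    (hf_one : f 1 = 1) (hf_zero : ∀ i, k < i → f i = 0) :
    ∃ d : V ≃ Fin (Fintype.card V),
      (∀ d' : V ≃ Fin (Fintype.card V), extVal G w f d' ≤ extVal G w f d) ∧
      (∀ u v x : V,
        (SimpleGraph.fromRel
            (fun a b => G.Adj a b ∧ Nat.dist (d a) (d b) ≤ k)).Reachable u v →
        d u ≤ d x → d x ≤ d v →
        (SimpleGraph.fromRel
            (fun a b => G.Adj a b ∧ Nat.dist (d a) (d b) ≤ k)).Reachable u x) :=
  extTSP_exists_optimal_with_contiguous_components_general G k _ fun _ _ =>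
    extVal_le_extVal (fun u v huv => (hw_pos u v huv).le) hf_mono hf_zero
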